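/- arXiv:2509.11805 — 6 statements merged into one kernel-verified Lean document; each statement's English description precedes it below -/
import Mathlib

section
/- There exists an effectively computable constant N > 0 such that for all integers n > N and all integers l with 2 ≤ l and l ≤ n/(10·log n), the ultra-log-concavity inequality (a(n,l-1)/C(n-3,l-1))² ≥ (a(n,l-2)/C(n-3,l-2))·(a(n,l)/C(n-3,l)) holds, where C(n-3,j) denotes the binomial coefficient. -/
/-!
The formula for `a n l` is dominated by its `k = l` term,
`leadingTerm n l = (l+1)^(l+n-1) / (l+1)!`.

The term with `k = l - r` is `leadingTerm n k` times the coefficient of `x^r` in the power series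
`exp (∑ C(n,k,i) x^i)`. Since `|C(n,k,i)| ≤ (8n²)^i`, this coefficient is at most
`(8en²)^r ≤ n^(3r)` in absolute value, whereas `leadingTerm n k / leadingTerm n l` is at most
`((k+1)/(l+1))^(n-1) ≤ exp (-r(n-1)/(l+1))`, hence at most `n^(-5r)` as soon as
`5(l+1) log n ≤ n - 1`. Each of the `l` terms with `k < l` is therefore at most `n^(-2)` times the
leading one, and together they give a relative error of at most `l/n² ≤ 1/(10n)`.

For the sequence `leadingTerm n l / C(n-3,l)`, Bernoulli's inequality applied to
`((l+2)² / ((l+1)(l+3)))^(l+n-1)` gives log-concavity with a factor `1 + 1/n` to spare, which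
absorbs the relative errors.
-/

open Finset Real

/-- The constant `C(n,k,i)` from Aluffi–Marcolli–Nascimento. -/
noncomputable def Cnki (n k i : ℕ) : ℝ :=
  ((-1 : ℝ) ^ i * (2 * (k : ℝ) * i + n * i + k + n - 1) + (k : ℝ) - i) / (i * (i + 1))
    - (1 / ((i : ℝ) * (k + 1) ^ i)) * ∑ j ∈ Finset.range (k + n - 1), (j : ℝ) ^ i

/-- The finite set of `m`-tuples of positive integers summing to `N`. -/
def posTuples (m N : ℕ) : Finset (Fin m → ℕ) :=
  (Fintype.piFinset fun _ => Finset.Icc 1 N).filter fun f => ∑ j, f j = N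

/-- `a n l = rk H^{2l}(M̄_{0,n})`, via the Aluffi–Marcolli–Nascimento formula. -/
noncomputable def a (n l : ℕ) : ℝ :=
  ∑ k ∈ Finset.range (l + 1),
    ((k + 1 : ℝ) ^ (k + n - 1) / (Nat.factorial (k + 1) : ℝ)) *
      ∑ m ∈ Finset.range (l - k + 1),
        (1 / (Nat.factorial m : ℝ)) *
          ∑ f ∈ posTuples m (l - k), ∏ j, Cnki n k (f j)

/-- The `k = l` term of the sum defining `a n l`. -/
noncomputable def leadingTerm (n l : ℕ) : ℝ :=
  (l + 1 : ℝ) ^ (l + n - 1) / (Nat.factorial (l + 1) : ℝ)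

/-- The coefficient of `x ^ r` in the formal power series `exp (∑ i ≥ 1, c i * x ^ i)`, written out
as a sum over tuples. -/
noncomputable def expCoeff (c : ℕ → ℝ) (r : ℕ) : ℝ :=
  ∑ m ∈ Finset.range (r + 1), (1 / (Nat.factorial m : ℝ)) * ∑ f ∈ posTuples m r, ∏ j, c (f j)

lemma a_eq_sum_leadingTerm_mul_expCoeff (n l : ℕ) :
    a n l = ∑ k ∈ Finset.range (l + 1), leadingTerm n k * expCoeff (Cnki n k) (l - k) := rfl

lemma leadingTerm_pos (n l : ℕ) : 0 < leadingTerm n l := by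
  unfold leadingTerm; positivity

lemma expCoeff_zero (c : ℕ → ℝ) : expCoeff c 0 = 1 := by
  simp [expCoeff, posTuples]

lemma card_posTuples_le (m r : ℕ) : (posTuples m r).card ≤ r ^ m :=
  (Finset.card_filter_le _ _).trans (by simp)

lemma abs_prod_le_pow_of_mem_posTuples {c : ℕ → ℝ} {K : ℝ} (hc : ∀ i, 1 ≤ i → |c i| ≤ K ^ i)
    {m r : ℕ} {f : Fin m → ℕ} (hf : f ∈ posTuples m r) : |∏ j, c (f j)| ≤ K ^ r := by
  simp only [posTuples, Finset.mem_filter, Fintype.mem_piFinset, Finset.mem_Icc] at hf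
  obtain ⟨hpos, hsum⟩ := hf
  rw [Finset.abs_prod, ← hsum, ← Finset.prod_pow_eq_pow_sum]
  exact Finset.prod_le_prod (fun _ _ => abs_nonneg _) fun j _ => hc _ (hpos j).1

lemma abs_expCoeff_le {c : ℕ → ℝ} {K : ℝ} (hK : 0 ≤ K) (hc : ∀ i, 1 ≤ i → |c i| ≤ K ^ i) (r : ℕ) :
    |expCoeff c r| ≤ (exp 1 * K) ^ r := by
  have htuples (m : ℕ) : |∑ f ∈ posTuples m r, ∏ j, c (f j)| ≤ (r : ℝ) ^ m * K ^ r :=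
    calc |∑ f ∈ posTuples m r, ∏ j, c (f j)|
        ≤ ∑ f ∈ posTuples m r, |∏ j, c (f j)| := Finset.abs_sum_le_sum_abs _ _
      _ ≤ (posTuples m r).card • K ^ r :=
          Finset.sum_le_card_nsmul _ _ _ fun _ hf => abs_prod_le_pow_of_mem_posTuples hc hf
      _ ≤ (r : ℝ) ^ m * K ^ r := by
          rw [nsmul_eq_mul]
          gcongr
          exact_mod_cast card_posTuples_le m r
  calc |expCoeff c r|
      ≤ ∑ m ∈ Finset.range (r + 1), |1 / (m.factorial : ℝ) * ∑ f ∈ posTuples m r, ∏ j, c (f j)| :=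
        Finset.abs_sum_le_sum_abs _ _
    _ ≤ ∑ m ∈ Finset.range (r + 1), 1 / (m.factorial : ℝ) * ((r : ℝ) ^ m * K ^ r) := by
        gcongr with m
        rw [abs_mul, abs_of_nonneg (by positivity : (0 : ℝ) ≤ 1 / m.factorial)]
        gcongr
        exact htuples m
    _ = (∑ m ∈ Finset.range (r + 1), (r : ℝ) ^ m / m.factorial) * K ^ r := by
        rw [Finset.sum_mul]
        exact Finset.sum_congr rfl fun _ _ => by ring
    _ ≤ exp r * K ^ r := by
        gcongr
        exact Real.sum_le_exp_of_nonneg r.cast_nonneg _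
    _ = (exp 1 * K) ^ r := by rw [mul_pow, ← Real.exp_nat_mul, mul_one]

lemma sum_range_pow_le_pow_succ (N i : ℕ) :
    ∑ j ∈ Finset.range N, (j : ℝ) ^ i ≤ (N : ℝ) ^ (i + 1) :=
  calc ∑ j ∈ Finset.range N, (j : ℝ) ^ i
      ≤ ∑ _j ∈ Finset.range N, (N : ℝ) ^ i := by
        gcongr with j hj
        exact (Finset.mem_range.1 hj).le
    _ = (N : ℝ) ^ (i + 1) := by simp [pow_succ']

lemma abs_Cnki_le_add {n i : ℕ} (hn : 1 ≤ n) (k : ℕ) (hi : 1 ≤ i) :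
    |Cnki n k i| ≤ (2 * k + n + 1) + ((k : ℝ) + n) ^ (i + 1) := by
  have hn1 : (1 : ℝ) ≤ n := by exact_mod_cast hn
  have hi1 : (1 : ℝ) ≤ i := by exact_mod_cast hi
  have hrational : |((-1 : ℝ) ^ i * (2 * (k : ℝ) * i + n * i + k + n - 1) + (k : ℝ) - i) /
      (i * (i + 1))| ≤ 2 * k + n + 1 := by
    rw [abs_div, abs_of_pos (show (0 : ℝ) < i * (i + 1) by positivity),
      div_le_iff₀ (by positivity)]
    have hnum : |(-1 : ℝ) ^ i * (2 * (k : ℝ) * i + n * i + k + n - 1) + (k : ℝ) - i| ≤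
        (2 * k + n + 1) * (i + 1) := by
      have hki : 0 ≤ (k : ℝ) * i := by positivity
      have hni : 0 ≤ (n : ℝ) * i := by positivity
      rcases neg_one_pow_eq_or ℝ i with h | h <;> rw [h, abs_le] <;> constructor <;> linarith
    refine hnum.trans ?_
    gcongr
    exact le_mul_of_one_le_left (by positivity) hi1
  have hpowerSum : |1 / ((i : ℝ) * (k + 1) ^ i) * ∑ j ∈ Finset.range (k + n - 1), (j : ℝ) ^ i| ≤
      ((k : ℝ) + n) ^ (i + 1) := by
    rw [abs_of_nonneg (by positivity)]
    have hcoeff : 1 / ((i : ℝ) * (k + 1) ^ i) ≤ 1 :=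
      (div_le_one (by positivity)).2
        (one_le_mul_of_one_le_of_one_le hi1 (one_le_pow₀ (by linarith)))
    calc 1 / ((i : ℝ) * (k + 1) ^ i) * ∑ j ∈ Finset.range (k + n - 1), (j : ℝ) ^ i
        ≤ ∑ j ∈ Finset.range (k + n - 1), (j : ℝ) ^ i :=
          mul_le_of_le_one_left (by positivity) hcoeff
      _ ≤ ((k + n - 1 : ℕ) : ℝ) ^ (i + 1) := sum_range_pow_le_pow_succ _ _
      _ ≤ ((k : ℝ) + n) ^ (i + 1) := by
          gcongr
          exact_mod_cast Nat.sub_le (k + n) 1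
  exact (abs_sub _ _).trans (add_le_add hrational hpowerSum)

lemma abs_Cnki_le_pow {n k i : ℕ} (hn : 1 ≤ n) (hk : k ≤ n) (hi : 1 ≤ i) :
    |Cnki n k i| ≤ (8 * (n : ℝ) ^ 2) ^ i := by
  have hn1 : (1 : ℝ) ≤ n := by exact_mod_cast hn
  have hkn : (k : ℝ) ≤ n := by exact_mod_cast hk
  have hlinear : 2 * (k : ℝ) + n + 1 ≤ (4 * (n : ℝ) ^ 2) ^ i :=
    calc 2 * (k : ℝ) + n + 1 ≤ 4 * (n : ℝ) ^ 2 := by nlinarith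
      _ ≤ (4 * (n : ℝ) ^ 2) ^ i := le_self_pow₀ (by nlinarith) (by omega)
  have hpow : ((k : ℝ) + n) ^ (i + 1) ≤ (4 * (n : ℝ) ^ 2) ^ i :=
    calc ((k : ℝ) + n) ^ (i + 1) ≤ (2 * n) ^ (i + 1) := by gcongr; linarith
      _ ≤ (2 * n) ^ (2 * i) := pow_le_pow_right₀ (by linarith) (by omega)
      _ = (4 * (n : ℝ) ^ 2) ^ i := by rw [pow_mul]; ring
  calc |Cnki n k i| ≤ (2 * k + n + 1) + ((k : ℝ) + n) ^ (i + 1) := abs_Cnki_le_add hn k hi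
    _ ≤ 2 * (4 * (n : ℝ) ^ 2) ^ i := by linarith
    _ ≤ 2 ^ i * (4 * (n : ℝ) ^ 2) ^ i := by
        gcongr
        exact le_self_pow₀ one_le_two (by omega)
    _ = (8 * (n : ℝ) ^ 2) ^ i := by rw [← mul_pow]; ring

lemma abs_expCoeff_Cnki_le {n k : ℕ} (hn : 24 ≤ n) (hk : k ≤ n) (r : ℕ) :
    |expCoeff (Cnki n k) r| ≤ (n : ℝ) ^ (3 * r) := by
  have hn24 : (24 : ℝ) ≤ n := by exact_mod_cast hn
  have hbase : exp 1 * (8 * (n : ℝ) ^ 2) ≤ (n : ℝ) ^ 3 :=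
    calc exp 1 * (8 * (n : ℝ) ^ 2) ≤ 3 * (8 * (n : ℝ) ^ 2) := by
          gcongr
          exact Real.exp_one_lt_three.le
      _ = 24 * (n : ℝ) ^ 2 := by ring
      _ ≤ n * (n : ℝ) ^ 2 := by gcongr
      _ = (n : ℝ) ^ 3 := by ring
  calc |expCoeff (Cnki n k) r| ≤ (exp 1 * (8 * (n : ℝ) ^ 2)) ^ r :=
        abs_expCoeff_le (by positivity) (fun i hi => abs_Cnki_le_pow (by omega) hk hi) r
    _ ≤ ((n : ℝ) ^ 3) ^ r := by gcongr
    _ = (n : ℝ) ^ (3 * r) := (pow_mul _ _ _).symm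

lemma pow_mul_exp_le_pow {x y : ℝ} (hx : 0 ≤ x) (hy : 0 < y) (s : ℕ) :
    x ^ s * exp (s * ((y - x) / y)) ≤ y ^ s := by
  have hbase : x * exp ((y - x) / y) ≤ y :=
    calc x * exp ((y - x) / y) = y * (1 - (y - x) / y) * exp ((y - x) / y) := by
          congr 1; field_simp; ring
      _ ≤ y * exp (-((y - x) / y)) * exp ((y - x) / y) := by
          gcongr
          exact Real.one_sub_le_exp_neg _
      _ = y := by rw [mul_assoc, ← Real.exp_add, neg_add_cancel, Real.exp_zero, mul_one]
  rw [Real.exp_nat_mul, ← mul_pow]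
  gcongr

lemma monotone_succ_pow_div_factorial :
    Monotone fun k : ℕ => ((k : ℝ) + 1) ^ k / (k + 1).factorial := by
  refine monotone_nat_of_le_succ fun k => ?_
  have hfact : ((k + 1 + 1).factorial : ℝ) = (k + 2) * (k + 1).factorial := by
    rw [Nat.factorial_succ]; push_cast; ring
  calc ((k : ℝ) + 1) ^ k / (k + 1).factorial ≤ ((k : ℝ) + 2) ^ k / (k + 1).factorial := by
        gcongr; norm_num
    _ = ((k + 1 : ℕ) + 1 : ℝ) ^ (k + 1) / (k + 1 + 1).factorial := by
        rw [hfact, pow_succ, show ((k + 1 : ℕ) : ℝ) + 1 = k + 2 by push_cast; ring]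
        field_simp

lemma leadingTerm_eq_pow_mul {n : ℕ} (hn : 1 ≤ n) (l : ℕ) :
    leadingTerm n l = ((l : ℝ) + 1) ^ (n - 1) * (((l : ℝ) + 1) ^ l / (l + 1).factorial) := by
  rw [leadingTerm, show l + n - 1 = (n - 1) + l by omega, pow_add, mul_div_assoc]

lemma leadingTerm_mul_exp_le {n k l : ℕ} (hn : 1 ≤ n) (hkl : k ≤ l) :
    leadingTerm n k * exp ((n - 1) * ((l - k) / (l + 1))) ≤ leadingTerm n l := by
  have hpow := pow_mul_exp_le_pow (x := (k : ℝ) + 1) (y := l + 1) (by positivity) (by positivity)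
    (n - 1)
  rw [add_sub_add_right_eq_sub, Nat.cast_pred hn] at hpow
  rw [leadingTerm_eq_pow_mul hn, leadingTerm_eq_pow_mul hn, mul_right_comm]
  exact mul_le_mul hpow (monotone_succ_pow_div_factorial hkl) (by positivity) (by positivity)

lemma leadingTerm_mul_pow_le {n k l c : ℕ} (hn : 1 ≤ n) (hkl : k ≤ l)
    (h : c * ((l : ℝ) + 1) * log n ≤ n - 1) :
    leadingTerm n k * (n : ℝ) ^ (c * (l - k)) ≤ leadingTerm n l := by
  have : (0 : ℝ) < n := by exact_mod_cast hn
  have hlk : (0 : ℝ) ≤ l - k := sub_nonneg.2 (by exact_mod_cast hkl)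
  have hexp : (n : ℝ) ^ (c * (l - k)) ≤ exp ((n - 1) * ((l - k) / (l + 1))) := by
    rw [← Real.log_le_iff_le_exp (by positivity), Real.log_pow, mul_div_assoc',
      le_div_iff₀ (by positivity), Nat.cast_mul, Nat.cast_sub hkl]
    calc c * ((l : ℝ) - k) * log n * (l + 1) = c * ((l : ℝ) + 1) * log n * (l - k) := by ring
      _ ≤ (n - 1) * (l - k) := by gcongr
  exact (mul_le_mul_of_nonneg_left hexp (leadingTerm_pos n k).le).trans
    (leadingTerm_mul_exp_le hn hkl)

lemma two_le_log {x : ℝ} (hx : 8 ≤ x) : 2 ≤ log x := by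
  rw [Real.le_log_iff_exp_le (by linarith)]
  calc exp 2 = exp 1 ^ 2 := by rw [← Real.exp_nat_mul]; norm_num
    _ ≤ 2.8 ^ 2 := by gcongr; linarith [Real.exp_one_lt_d9]
    _ ≤ x := by linarith

lemma ten_mul_add_one_le {n l : ℕ} (hn : 8 ≤ n) (h : 5 * ((l : ℝ) + 1) * log n ≤ n - 1) :
    10 * ((l : ℝ) + 1) ≤ n - 1 :=
  calc 10 * ((l : ℝ) + 1) = 5 * ((l : ℝ) + 1) * 2 := by ring
    _ ≤ 5 * ((l : ℝ) + 1) * log n := by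
        gcongr
        exact two_le_log (by exact_mod_cast hn)
    _ ≤ n - 1 := h

lemma abs_leadingTerm_mul_expCoeff_le {n k l : ℕ} (hn : 24 ≤ n) (hkl : k < l)
    (h : 5 * ((l : ℝ) + 1) * log n ≤ n - 1) :
    |leadingTerm n k * expCoeff (Cnki n k) (l - k)| ≤ leadingTerm n l / (n : ℝ) ^ 2 := by
  have hn1 : (1 : ℝ) ≤ n := by exact_mod_cast (by omega : 1 ≤ n)
  have hkn : k ≤ n := by
    have : (l : ℝ) ≤ n := by linarith [ten_mul_add_one_le (by omega) h, l.cast_nonneg (α := ℝ)]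
    exact hkl.le.trans (by exact_mod_cast this)
  have hTk := leadingTerm_pos n k
  rw [abs_mul, abs_of_pos hTk, le_div_iff₀ (by positivity)]
  calc leadingTerm n k * |expCoeff (Cnki n k) (l - k)| * (n : ℝ) ^ 2
      ≤ leadingTerm n k * (n : ℝ) ^ (3 * (l - k)) * (n : ℝ) ^ (2 * (l - k)) := by
        gcongr ?_ * ?_ * ?_
        · exact abs_expCoeff_Cnki_le hn hkn _
        · exact pow_le_pow_right₀ hn1 (by omega)
    _ = leadingTerm n k * (n : ℝ) ^ (5 * (l - k)) := by ring
    _ ≤ leadingTerm n l := leadingTerm_mul_pow_le (by omega) hkl.le (by exact_mod_cast h)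

lemma abs_a_sub_leadingTerm_le {n l : ℕ} (hn : 24 ≤ n)
    (h : 5 * ((l : ℝ) + 1) * log n ≤ n - 1) :
    |a n l - leadingTerm n l| ≤ 1 / (10 * n) * leadingTerm n l := by
  have : (0 : ℝ) < n := by exact_mod_cast (by omega : 0 < n)
  have hT := leadingTerm_pos n l
  have hl : (l : ℝ) ≤ n / 10 := by linarith [ten_mul_add_one_le (by omega) h]
  rw [a_eq_sum_leadingTerm_mul_expCoeff, Finset.sum_range_succ, Nat.sub_self, expCoeff_zero,
    mul_one, add_sub_cancel_right]
  calc |∑ k ∈ Finset.range l, leadingTerm n k * expCoeff (Cnki n k) (l - k)|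
      ≤ ∑ k ∈ Finset.range l, |leadingTerm n k * expCoeff (Cnki n k) (l - k)| :=
        Finset.abs_sum_le_sum_abs _ _
    _ ≤ (Finset.range l).card • (leadingTerm n l / (n : ℝ) ^ 2) :=
        Finset.sum_le_card_nsmul _ _ _ fun k hk =>
          abs_leadingTerm_mul_expCoeff_le hn (Finset.mem_range.1 hk) h
    _ = l * (leadingTerm n l / (n : ℝ) ^ 2) := by rw [Finset.card_range, nsmul_eq_mul]
    _ ≤ n / 10 * (leadingTerm n l / (n : ℝ) ^ 2) := by gcongr
    _ = 1 / (10 * n) * leadingTerm n l := by field_simp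

lemma pow_mul_add_le_add_one_pow_mul {z : ℝ} (hz : 0 < z) (e : ℕ) :
    z ^ e * (z + e) ≤ (z + 1) ^ e * z := by
  have hbernoulli : 1 + e * (1 / z) ≤ (1 + 1 / z) ^ e :=
    one_add_mul_le_pow (by linarith [one_div_pos.2 hz]) e
  calc z ^ e * (z + e) = z ^ e * (1 + e * (1 / z)) * z := by field_simp
    _ ≤ z ^ e * (1 + 1 / z) ^ e * z := by gcongr
    _ = (z + 1) ^ e * z := by rw [← mul_pow, mul_add, mul_one, mul_one_div_cancel hz.ne']

lemma leadingTerm_succ {n : ℕ} (hn : 1 ≤ n) (l : ℕ) :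
    leadingTerm n (l + 1) = ((l : ℝ) + 2) ^ (l + n - 1) / (l + 1).factorial := by
  rw [leadingTerm, Nat.factorial_succ (l + 1), show l + 1 + n - 1 = l + n - 1 + 1 by omega,
    show ((l + 1 : ℕ) : ℝ) + 1 = l + 2 by push_cast; ring,
    show (((l + 1 + 1) * (l + 1).factorial : ℕ) : ℝ) = (l + 2) * (l + 1).factorial by
      push_cast; ring, pow_succ']
  field_simp

lemma leadingTerm_add_two {n : ℕ} (hn : 1 ≤ n) (l : ℕ) :
    leadingTerm n (l + 2) =
      ((l : ℝ) + 3) ^ (l + n - 1) * (l + 3) / ((l + 2) * (l + 1).factorial) := by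
  rw [leadingTerm_succ hn (l + 1), Nat.factorial_succ (l + 1),
    show l + 1 + n - 1 = l + n - 1 + 1 by omega, pow_succ,
    show ((l + 1 : ℕ) : ℝ) + 2 = l + 3 by push_cast; ring]
  push_cast
  ring

lemma leadingTerm_mul_le_sq {n : ℕ} (hn : 1 ≤ n) (p : ℕ) :
    leadingTerm n p * leadingTerm n (p + 2) * ((p + 2) * ((p + 1) * (p + 3) + (p + n - 1))) ≤
      leadingTerm n (p + 1) ^ 2 * ((p + 1) * (p + 3) ^ 2) := by
  have hbernoulli := pow_mul_add_le_add_one_pow_mul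
    (show (0 : ℝ) < (p + 1) * (p + 3) by positivity) (p + n - 1)
  rw [show ((p : ℝ) + 1) * (p + 3) + 1 = (p + 2) ^ 2 by ring, mul_pow,
    Nat.cast_pred (by omega), Nat.cast_add] at hbernoulli
  rw [leadingTerm_add_two hn, leadingTerm_succ hn, leadingTerm]
  generalize p + n - 1 = e at hbernoulli ⊢
  have hF : (0 : ℝ) < (p + 1).factorial := by positivity
  generalize ((p + 1).factorial : ℝ) = F at hF ⊢
  calc _ = ((p : ℝ) + 1) ^ e * (p + 3) ^ e * ((p + 1) * (p + 3) + (p + n - 1)) *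
        ((p + 3) / F ^ 2) := by field_simp
    _ ≤ (((p : ℝ) + 2) ^ 2) ^ e * ((p + 1) * (p + 3)) * ((p + 3) / F ^ 2) := by gcongr
    _ = _ := by rw [← pow_mul, mul_comm 2 e, pow_mul]; field_simp

lemma choose_mul_choose_add_two (N k : ℕ) :
    N.choose k * N.choose (k + 2) * ((k + 2) * (N - k)) =
      N.choose (k + 1) ^ 2 * ((k + 1) * (N - (k + 1))) :=
  calc N.choose k * N.choose (k + 2) * ((k + 2) * (N - k))
      = N.choose k * (N - k) * (N.choose (k + 2) * (k + 2)) := by ring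
    _ = N.choose (k + 1) * (k + 1) * (N.choose (k + 1) * (N - (k + 1))) := by
        rw [Nat.choose_succ_right_eq, Nat.choose_succ_right_eq]
    _ = N.choose (k + 1) ^ 2 * ((k + 1) * (N - (k + 1))) := by ring

lemma choose_sq_div_choose_mul_choose {N k : ℕ} (h : k + 2 ≤ N) :
    (N.choose (k + 1) : ℝ) ^ 2 / (N.choose k * N.choose (k + 2)) =
      (k + 2) * (N - k) / ((k + 1) * (N - (k + 1))) := by
  have hC₀ : (0 : ℝ) < N.choose k := by exact_mod_cast Nat.choose_pos (by omega)
  have hC₂ : (0 : ℝ) < N.choose (k + 2) := by exact_mod_cast Nat.choose_pos h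
  have hNk : (k : ℝ) + 2 ≤ N := by exact_mod_cast h
  have hmul : (N.choose k * N.choose (k + 2) * ((k + 2) * (N - k)) : ℝ) =
      N.choose (k + 1) ^ 2 * ((k + 1) * (N - (k + 1))) := by
    have := congrArg (Nat.cast (R := ℝ)) (choose_mul_choose_add_two N k)
    push_cast [show k ≤ N by omega, show k + 1 ≤ N by omega] at this
    exact this
  have hden : (0 : ℝ) < (k + 1) * (N - (k + 1)) := mul_pos (by positivity) (by linarith)
  rw [div_eq_div_iff (by positivity) hden.ne', ← hmul]
  ring

lemma add_one_mul_sq_mul_sub_le {x u : ℝ} (hu : 0 ≤ u) (hux : 3 * u + 4 ≤ x) :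
    (x + 1) * (u ^ 2 * (x - u)) ≤ x * ((u ^ 2 - u + x - 4) * (x - 1 - u)) := by
  have hprod : 2 * u * u ≤ (x - 4 - u) * (x - 1 - u) :=
    mul_le_mul (by linarith) (by linarith) hu (by linarith)
  have hcube : 0 ≤ u * u ^ 2 := by positivity
  linarith [mul_le_mul_of_nonneg_left hprod (show 0 ≤ x by linarith)]

lemma one_add_one_div_mul_leadingTerm_div_choose_le_sq {n p : ℕ} (hp : 3 * (p + 3) + 4 ≤ n) :
    (1 + 1 / (n : ℝ)) * (leadingTerm n p / (n - 3).choose p *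
      (leadingTerm n (p + 2) / (n - 3).choose (p + 2))) ≤
      (leadingTerm n (p + 1) / (n - 3).choose (p + 1)) ^ 2 := by
  have hpn : 3 * ((p : ℝ) + 3) + 4 ≤ n := by exact_mod_cast hp
  have hn0 : (0 : ℝ) < n := by linarith
  have hC₁ : (0 : ℝ) < (n - 3).choose (p + 1) := by exact_mod_cast Nat.choose_pos (by omega)
  have hchoose := choose_sq_div_choose_mul_choose (show p + 2 ≤ n - 3 by omega)
  rw [Nat.cast_sub (by omega), Nat.cast_ofNat] at hchoose
  have hsub : (0 : ℝ) < n - 3 - (p + 1) := by linarith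
  have hsub' : (0 : ℝ) < n - 3 - p := by linarith
  set D : ℝ := (p + 1) * (p + 3) + (p + n - 1)
  have hD : 0 < D := add_pos (by positivity) (by linarith [p.cast_nonneg (α := ℝ)])
  have hleading : leadingTerm n p * leadingTerm n (p + 2) ≤
      leadingTerm n (p + 1) ^ 2 * ((p + 1) * (p + 3) ^ 2) / ((p + 2) * D) := by
    rw [le_div_iff₀ (by positivity)]
    exact leadingTerm_mul_le_sq (by omega) p
  have hratio : (n + 1) * ((p + 3) ^ 2 * (n - 3 - p)) / (n * (D * (n - 3 - (p + 1)))) ≤ 1 := by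
    rw [div_le_one (by positivity)]
    linarith [add_one_mul_sq_mul_sub_le (by positivity : (0 : ℝ) ≤ p + 3) hpn]
  calc _ = (1 + 1 / (n : ℝ)) * (leadingTerm n p * leadingTerm n (p + 2)) *
        (((n - 3).choose (p + 1) : ℝ) ^ 2 / ((n - 3).choose p * (n - 3).choose (p + 2))) /
          (n - 3).choose (p + 1) ^ 2 := by field_simp
    _ ≤ (1 + 1 / (n : ℝ)) *
        (leadingTerm n (p + 1) ^ 2 * ((p + 1) * (p + 3) ^ 2) / ((p + 2) * D)) *
        ((p + 2) * (n - 3 - p) / ((p + 1) * (n - 3 - (p + 1)))) /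
          (n - 3).choose (p + 1) ^ 2 := by
        rw [hchoose]
        gcongr
    _ = (n + 1) * ((p + 3) ^ 2 * (n - 3 - p)) / (n * (D * (n - 3 - (p + 1)))) *
        (leadingTerm n (p + 1) / (n - 3).choose (p + 1)) ^ 2 := by
        field_simp
    _ ≤ (leadingTerm n (p + 1) / (n - 3).choose (p + 1)) ^ 2 :=
        mul_le_of_le_one_left (by positivity) hratio

lemma one_add_sq_le_one_sub_sq_mul {δ : ℝ} (hδ : 0 ≤ δ) (hδ' : δ ≤ 3 / 10) :
    (1 + δ) ^ 2 ≤ (1 - δ) ^ 2 * (1 + 10 * δ) := by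
  have hlinear : 0 ≤ δ * (6 - 20 * δ) := mul_nonneg hδ (by linarith)
  have hcubic : 0 ≤ 10 * δ ^ 3 := by positivity
  linarith

lemma mul_le_sq_of_abs_sub_le {x₀ x₁ x₂ y₀ y₁ y₂ δ : ℝ} (hδ : 0 ≤ δ) (hδ' : δ ≤ 3 / 10)
    (hy₀ : 0 ≤ y₀) (hy₁ : 0 ≤ y₁) (hy₂ : 0 ≤ y₂) (h₀ : |x₀ - y₀| ≤ δ * y₀)
    (h₁ : |x₁ - y₁| ≤ δ * y₁) (h₂ : |x₂ - y₂| ≤ δ * y₂)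
    (h : (1 + 10 * δ) * (y₀ * y₂) ≤ y₁ ^ 2) : x₀ * x₂ ≤ x₁ ^ 2 := by
  rw [abs_le] at h₀ h₁ h₂
  have hle {y : ℝ} (hy : 0 ≤ y) : δ * y ≤ y := mul_le_of_le_one_left hy (by linarith)
  calc x₀ * x₂ ≤ (1 + δ) * y₀ * ((1 + δ) * y₂) :=
        mul_le_mul (by linarith) (by linarith) (by linarith [hle hy₂]) (by positivity)
    _ = (1 + δ) ^ 2 * (y₀ * y₂) := by ring
    _ ≤ (1 - δ) ^ 2 * (1 + 10 * δ) * (y₀ * y₂) := by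
        gcongr
        exact one_add_sq_le_one_sub_sq_mul hδ hδ'
    _ = (1 - δ) ^ 2 * ((1 + 10 * δ) * (y₀ * y₂)) := mul_assoc _ _ _
    _ ≤ (1 - δ) ^ 2 * y₁ ^ 2 := by gcongr
    _ = ((1 - δ) * y₁) ^ 2 := (mul_pow _ _ _).symm
    _ ≤ x₁ ^ 2 := pow_le_pow_left₀ (mul_nonneg (by linarith) hy₁) (by linarith) 2

lemma abs_a_div_sub_leadingTerm_div_le {n l : ℕ} (hn : 24 ≤ n)
    (h : 5 * ((l : ℝ) + 1) * log n ≤ n - 1) {c : ℝ} (hc : 0 ≤ c) :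
    |a n l / c - leadingTerm n l / c| ≤ 1 / (10 * n) * (leadingTerm n l / c) := by
  rw [← sub_div, abs_div, abs_of_nonneg hc, ← mul_div_assoc]
  gcongr
  exact abs_a_sub_leadingTerm_le hn h

lemma a_div_choose_mul_le_sq {n p : ℕ} (hn : 24 ≤ n)
    (h : 5 * ((p : ℝ) + 3) * log n ≤ n - 1) :
    a n p / (n - 3).choose p * (a n (p + 2) / (n - 3).choose (p + 2)) ≤
      (a n (p + 1) / (n - 3).choose (p + 1)) ^ 2 := by
  have hn24 : (24 : ℝ) ≤ n := by exact_mod_cast hn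
  have hclose (q : ℕ) (hq : q ≤ p + 2) :
      |a n q / (n - 3).choose q - leadingTerm n q / (n - 3).choose q| ≤
        1 / (10 * n) * (leadingTerm n q / (n - 3).choose q) := by
    refine abs_a_div_sub_leadingTerm_div_le hn (le_trans ?_ h) (Nat.cast_nonneg _)
    have : (q : ℝ) + 1 ≤ p + 3 := by exact_mod_cast Nat.succ_le_succ hq
    gcongr
  have hnonneg (q : ℕ) : 0 ≤ leadingTerm n q / (n - 3).choose q :=
    div_nonneg (leadingTerm_pos n q).le (Nat.cast_nonneg _)
  have hpn : 3 * (p + 3) + 4 ≤ n := by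
    have : 10 * (((p + 2 : ℕ) : ℝ) + 1) ≤ n - 1 :=
      ten_mul_add_one_le (by omega) (by push_cast; linarith)
    push_cast at this
    exact_mod_cast (by linarith : 3 * ((p : ℝ) + 3) + 4 ≤ n)
  have hδ : 1 / (10 * (n : ℝ)) ≤ 3 / 10 := by
    rw [div_le_iff₀ (by positivity)]
    linarith
  refine mul_le_sq_of_abs_sub_le (by positivity) hδ (hnonneg p) (hnonneg (p + 1)) (hnonneg (p + 2))
    (hclose p (by omega)) (hclose (p + 1) (by omega)) (hclose (p + 2) le_rfl) ?_
  rw [show 10 * (1 / (10 * (n : ℝ))) = 1 / n by field_simp]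
  exact one_add_one_div_mul_leadingTerm_div_choose_le_sq hpn

lemma thirtyTwo_le_of_sixteen_mul_log_le {x : ℝ} (hx : 2 ≤ x) (h : 16 * log x ≤ x) : 32 ≤ x := by
  have hlog : log 2 ≤ log x := Real.log_le_log two_pos hx
  linarith [two_le_log (x := x) (by linarith [Real.log_two_gt_d9])]

theorem stmt0_general {n l : ℕ} (hn : 1 < n) (hl : 2 ≤ l)
    (h : (l : ℝ) ≤ (n : ℝ) / (8 * Real.log n)) :
    (a n (l - 1) / ((n - 3).choose (l - 1) : ℝ)) ^ 2 ≥
      (a n (l - 2) / ((n - 3).choose (l - 2) : ℝ)) *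
        (a n l / ((n - 3).choose l : ℝ)) := by
  have hlog : 0 < log n := Real.log_pos (by exact_mod_cast hn)
  have hl' : (2 : ℝ) ≤ l := by exact_mod_cast hl
  have hln : 8 * l * log n ≤ n := by
    rw [le_div_iff₀ (by positivity)] at h
    linarith
  have hn32 : (32 : ℝ) ≤ n := by
    refine thirtyTwo_le_of_sixteen_mul_log_le (by exact_mod_cast hn) (le_trans ?_ hln)
    gcongr
    linarith
  obtain ⟨p, rfl⟩ := Nat.exists_eq_add_of_le' hl
  push_cast at hl' hln
  refine a_div_choose_mul_le_sq (by exact_mod_cast (by linarith : (24 : ℝ) ≤ n)) ?_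
  calc 5 * ((p : ℝ) + 3) * log n ≤ 5 * (3 / 2 * (p + 2)) * log n := by gcongr; linarith
    _ = 15 / 16 * (8 * (p + 2) * log n) := by ring
    _ ≤ 15 / 16 * n := by gcongr
    _ ≤ n - 1 := by linarith

/-- **Theorem (improved log-concavity range).** There is an (effectively computable)
constant `N > 0` such that for all integers `n > N` and `2 ≤ l ≤ n / (10 log n)`,
`(a(n,l-1)/C(n-3,l-1))² ≥ (a(n,l-2)/C(n-3,l-2)) · (a(n,l)/C(n-3,l))`. -/
theorem stmt0 :
    ∃ N : ℕ, 0 < N ∧ ∀ n l : ℕ, N < n → 2 ≤ l →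
      (l : ℝ) ≤ (n : ℝ) / (10 * Real.log n) →
      (a n (l - 1) / ((n - 3).choose (l - 1) : ℝ)) ^ 2 ≥
        (a n (l - 2) / ((n - 3).choose (l - 2) : ℝ)) *
          (a n l / ((n - 3).choose l : ℝ)) := by
  refine ⟨1, one_pos, fun n l hn hl h => stmt0_general hn hl (h.trans ?_)⟩
  have : 0 < Real.log n := Real.log_pos (by exact_mod_cast hn)
  gcongr
  norm_num
end

section
/- There exists a real constant C ≥ 1 such that for all integers n ≥ 3, all integers k with 0 ≤ k ≤ n, and all integers i ≥ 1, one has |C(n,k,i)| ≤ C·n^{i+1}. -/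
/-!
Write `C(n,k,i)` as a rational part minus a power-sum part. Since the sign `(-1)^i` has absolute
value `1`, the numerator of the rational part is at most a multiple of `(k + n)(i + 1)`. In the
power sum every base is less than `k + n ≤ n(k + 1)`, so after division by `(k + 1)^i` each of its
fewer than `k + n` terms is at most `n^i`. Together the two parts are `O((k + n) n^i)`, which for
`k ≤ n` is `O(n^(i+1))`.
-/

open Finset Real

lemma sum_range_pow_le {R : Type*} [Semiring R] [PartialOrder R] [IsOrderedRing R] (m i : ℕ) :
    ∑ j ∈ range m, (j : R) ^ i ≤ m * (m : R) ^ i := by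
  have hterm : ∀ j ∈ range m, (j : R) ^ i ≤ (m : R) ^ i := fun j hj => by
    gcongr
    exact (mem_range.mp hj).le
  simpa only [card_range, nsmul_eq_mul] using sum_le_card_nsmul _ _ _ hterm

section OrderedField

variable {K : Type*} [Field K] [LinearOrder K] [IsStrictOrderedRing K]

lemma abs_rational_part_le {ε x y s : K} (hε : |ε| ≤ 1) (hx : 1 ≤ x) (hy : 0 ≤ y) (hs : 1 ≤ s) :
    |(ε * (2 * y * s + x * s + y + x - 1) + y - s) / (s * (s + 1))| ≤ 2 * (y + x) := by
  have hmain_nonneg : 0 ≤ 2 * y * s + x * s + y + x - 1 := by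
    have : 0 ≤ 2 * y * s + x * s := by positivity
    linarith
  have hsign : |ε * (2 * y * s + x * s + y + x - 1)| ≤ 2 * y * s + x * s + y + x - 1 := by
    rw [abs_mul, abs_of_nonneg hmain_nonneg]
    exact mul_le_of_le_one_left hmain_nonneg hε
  have hrest : |y - s| ≤ y + s := by
    simpa only [abs_of_nonneg hy, abs_of_pos (zero_lt_one.trans_le hs)] using abs_sub y s
  rw [abs_div, abs_of_pos (show 0 < s * (s + 1) by positivity), div_le_iff₀ (by positivity)]
  calc |ε * (2 * y * s + x * s + y + x - 1) + y - s|
      ≤ |ε * (2 * y * s + x * s + y + x - 1)| + |y - s| := by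
        rw [add_sub_assoc]; exact abs_add_le _ _
    _ ≤ (2 * y + x) * (s + 1) + (s - 1) := by linarith
    _ ≤ (2 * y + x) * (s + 1) + x * (s + 1) := by
        gcongr
        exact (by linarith : s - 1 ≤ s + 1).trans (le_mul_of_one_le_left (by positivity) hx)
    _ = 2 * (y + x) * (1 * (s + 1)) := by ring
    _ ≤ 2 * (y + x) * (s * (s + 1)) := by gcongr

lemma one_div_mul_sum_range_pow_le {s c : K} (hs : 1 ≤ s) (hc : 0 < c) (m i : ℕ) :
    1 / (s * c ^ i) * ∑ j ∈ range m, (j : K) ^ i ≤ m * (m / c) ^ i :=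
  calc 1 / (s * c ^ i) * ∑ j ∈ range m, (j : K) ^ i
      ≤ 1 / (1 * c ^ i) * (m * (m : K) ^ i) := by
        gcongr
        exact sum_range_pow_le m i
    _ = m * (m / c) ^ i := by rw [div_pow]; ring

lemma abs_power_sum_part_le {n : ℕ} (hn : 1 ≤ n) (k i : ℕ) {s : K} (hs : 1 ≤ s) :
    |1 / (s * (k + 1) ^ i) * ∑ j ∈ range (k + n - 1), (j : K) ^ i| ≤ (k + n) * (n : K) ^ i := by
  have hcount : ((k + n - 1 : ℕ) : K) ≤ k + n := by exact_mod_cast Nat.sub_le (k + n) 1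
  have hbase : ((k + n - 1 : ℕ) : K) / (k + 1) ≤ n := by
    rw [div_le_iff₀ (by positivity)]
    have hk : (k : K) ≤ n * k := le_mul_of_one_le_left k.cast_nonneg (by exact_mod_cast hn)
    linarith
  rw [abs_of_nonneg (by positivity)]
  calc 1 / (s * (k + 1) ^ i) * ∑ j ∈ range (k + n - 1), (j : K) ^ i
      ≤ (k + n - 1 : ℕ) * (((k + n - 1 : ℕ) : K) / (k + 1)) ^ i :=
        one_div_mul_sum_range_pow_le hs (by positivity) _ i
    _ ≤ (k + n) * (n : K) ^ i := by gcongr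

end OrderedField

theorem stmt4_general {n i : ℕ} (hn : 1 ≤ n) (hi : 1 ≤ i) (k : ℕ) :
    |Cnki n k i| ≤ 3 * (k + n) * (n : ℝ) ^ i := by
  have hn' : (1 : ℝ) ≤ n := by exact_mod_cast hn
  have hi' : (1 : ℝ) ≤ i := by exact_mod_cast hi
  calc |Cnki n k i|
      ≤ 2 * (k + n) + (k + n) * (n : ℝ) ^ i :=
        (abs_sub _ _).trans <| add_le_add
          (abs_rational_part_le (abs_neg_one_pow i).le hn' k.cast_nonneg hi')
          (abs_power_sum_part_le hn k i hi')
    _ ≤ 2 * (k + n) * (n : ℝ) ^ i + (k + n) * (n : ℝ) ^ i := by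
        gcongr ?_ + _
        exact le_mul_of_one_le_right (by positivity) (one_le_pow₀ hn')
    _ = 3 * (k + n) * (n : ℝ) ^ i := by ring

/-- **Lemma.** There is a real constant `C ≥ 1` such that for all integers `n ≥ 3`,
`0 ≤ k ≤ n`, and `i ≥ 1`, one has `|C(n,k,i)| ≤ C · n^{i+1}`. -/
theorem stmt4 :
    ∃ C : ℝ, 1 ≤ C ∧ ∀ n k i : ℕ, 3 ≤ n → k ≤ n → 1 ≤ i →
      |Cnki n k i| ≤ C * (n : ℝ) ^ (i + 1) := by
  refine ⟨6, by norm_num, fun n k i hn hk hi => (stmt4_general (by lia) hi k).trans ?_⟩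
  calc 3 * (k + n) * (n : ℝ) ^ i ≤ 3 * (n + n) * (n : ℝ) ^ i := by gcongr
    _ = 6 * (n : ℝ) ^ (i + 1) := by ring
end

section
/- Let n ≥ 3 and k ≥ 0 be integers, let N ≥ 0 be an integer, and let C ≥ 1 be a real number such that |C(n,k,i)| ≤ C·n^{i+1} for every integer i with 1 ≤ i ≤ N. Then |∑_{m=0}^{N} (1/m!)·∑_{i_1+⋯+i_m = N} C(n,k,i_1)⋯C(n,k,i_m)| ≤ (N+1)·(4Cn²)^N, where the inner sum is over m-tuples of positive integers summing to N and the empty product (the m = 0 term, nonzero only when N = 0) equals 1. -/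
/-!
The tuples of positive integers with sum `N`, of all lengths together, are the compositions of `N`,
so there are `2 ^ (N - 1)` of them. A tuple of length `m` contributes at most
`∏ C x ^ (i_j + 1) = (C x) ^ m * x ^ N`, and `m ≤ N` with `1 ≤ C x` bounds this by
`(C x ^ 2) ^ N`. Weights of norm at most `1`, such as `1 / m!`, do not increase the total.
-/

open Finset Real

lemma mem_posTuples {m N : ℕ} {f : Fin m → ℕ} :
    f ∈ posTuples m N ↔ (∀ j, 1 ≤ f j ∧ f j ≤ N) ∧ ∑ j, f j = N := by
  simp only [posTuples, mem_filter, Fintype.mem_piFinset, mem_Icc]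

lemma blocksFun_mem_posTuples {N : ℕ} (c : Composition N) :
    c.blocksFun ∈ posTuples c.length N :=
  mem_posTuples.2 ⟨fun j => ⟨c.one_le_blocksFun j, c.blocksFun_le j⟩, c.sum_blocksFun⟩

lemma exists_composition_of_mem_posTuples {m N : ℕ} {f : Fin m → ℕ} (hf : f ∈ posTuples m N) :
    ∃ c : Composition N, (⟨c.length, c.blocksFun⟩ : Σ m, Fin m → ℕ) = ⟨m, f⟩ := by
  obtain ⟨hpos, hsum⟩ := mem_posTuples.1 hf
  let c : Composition N :=
    { blocks := List.ofFn f
      blocks_pos := fun hi => by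
        obtain ⟨j, rfl⟩ := List.mem_ofFn.1 hi
        exact (hpos j).1
      blocks_sum := by rw [List.sum_ofFn, hsum] }
  exact ⟨c, List.ofFn_inj'.1 c.ofFn_blocksFun⟩

-- For `N = 0` the exponent truncates to `0`, which counts the empty tuple.
lemma sum_card_posTuples (N : ℕ) : ∑ m ∈ range (N + 1), #(posTuples m N) = 2 ^ (N - 1) := by
  rw [← card_sigma, ← composition_card, ← card_univ]
  symm
  refine card_bij (fun c _ => ⟨c.length, c.blocksFun⟩) (fun c _ => ?_) (fun c _ d _ h => ?_)
    (fun ⟨m, f⟩ h => ?_)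
  · exact mem_sigma.2 ⟨mem_range_succ_iff.2 c.length_le, blocksFun_mem_posTuples c⟩
  · exact Composition.ext (by simpa only [Composition.ofFn_blocksFun] using List.ofFn_inj'.2 h)
  · obtain ⟨c, hc⟩ := exists_composition_of_mem_posTuples (mem_sigma.1 h).2
    exact ⟨c, mem_univ c, hc⟩

section NormedCommRing

variable {R : Type*} [NormedCommRing R] [NormOneClass R] {a : ℕ → R} {N : ℕ} {C x : ℝ}

lemma norm_prod_le_of_mem_posTuples (ha : ∀ i, 1 ≤ i → i ≤ N → ‖a i‖ ≤ C * x ^ (i + 1))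
    {m : ℕ} {f : Fin m → ℕ} (hf : f ∈ posTuples m N) :
    ‖∏ j, a (f j)‖ ≤ (C * x) ^ m * x ^ N := by
  obtain ⟨hmem, hsum⟩ := mem_posTuples.1 hf
  calc ‖∏ j, a (f j)‖ ≤ ∏ j, ‖a (f j)‖ := Finset.norm_prod_le _ _
    _ ≤ ∏ j, C * x ^ (f j + 1) :=
        prod_le_prod (fun _ _ => norm_nonneg _) fun j _ => ha _ (hmem j).1 (hmem j).2
    _ = ∏ j, C * x * x ^ f j := prod_congr rfl fun j _ => by ring
    _ = (C * x) ^ m * x ^ N := by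
        rw [prod_mul_distrib, prod_pow_eq_pow_sum, hsum, prod_const, card_univ, Fintype.card_fin]

lemma norm_sum_posTuples_le (hx : 0 ≤ x) (hCx : 1 ≤ C * x)
    (ha : ∀ i, 1 ≤ i → i ≤ N → ‖a i‖ ≤ C * x ^ (i + 1)) {m : ℕ} (hm : m ≤ N) :
    ‖∑ f ∈ posTuples m N, ∏ j, a (f j)‖ ≤ #(posTuples m N) * (C * x ^ 2) ^ N := by
  rw [← nsmul_eq_mul]
  refine (norm_sum_le_of_le _ fun f hf => ?_).trans_eq (sum_const _)
  calc ‖∏ j, a (f j)‖ ≤ (C * x) ^ m * x ^ N := norm_prod_le_of_mem_posTuples ha hf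
    _ ≤ (C * x) ^ N * x ^ N := by gcongr
    _ = (C * x ^ 2) ^ N := by ring

theorem stmt6_general (hx : 0 ≤ x) (hCx : 1 ≤ C * x)
    (ha : ∀ i, 1 ≤ i → i ≤ N → ‖a i‖ ≤ C * x ^ (i + 1))
    {w : ℕ → R} (hw : ∀ m ≤ N, ‖w m‖ ≤ 1) :
    ‖∑ m ∈ range (N + 1), w m * ∑ f ∈ posTuples m N, ∏ j, a (f j)‖ ≤
      2 ^ (N - 1) * (C * x ^ 2) ^ N := by
  calc ‖∑ m ∈ range (N + 1), w m * ∑ f ∈ posTuples m N, ∏ j, a (f j)‖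
      ≤ ∑ m ∈ range (N + 1), #(posTuples m N) * (C * x ^ 2) ^ N := by
        refine norm_sum_le_of_le _ fun m hm => ?_
        have hmN : m ≤ N := mem_range_succ_iff.1 hm
        exact (norm_mul_le _ _).trans <|
          (mul_le_of_le_one_left (norm_nonneg _) (hw m hmN)).trans
            (norm_sum_posTuples_le hx hCx ha hmN)
    _ = 2 ^ (N - 1) * (C * x ^ 2) ^ N := by
        rw [← sum_mul, ← Nat.cast_sum, sum_card_posTuples, Nat.cast_pow, Nat.cast_ofNat]

end NormedCommRing

lemma norm_one_div_factorial_le_one (m : ℕ) : ‖(1 / (Nat.factorial m : ℝ))‖ ≤ 1 := by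
  rw [norm_div, norm_one, Real.norm_natCast]
  exact div_le_one_of_le₀ (mod_cast Nat.factorial_pos m) (Nat.cast_nonneg _)

lemma two_pow_pred_mul_pow_le {y : ℝ} (hy : 0 ≤ y) (N : ℕ) :
    2 ^ (N - 1) * y ^ N ≤ ((N : ℝ) + 1) * (4 * y) ^ N := by
  have hpow : (2 : ℝ) ^ (N - 1) ≤ 4 ^ N :=
    calc (2 : ℝ) ^ (N - 1) ≤ 2 ^ N := pow_le_pow_right₀ one_le_two (N.sub_le 1)
      _ ≤ 4 ^ N := by gcongr; norm_num
  calc 2 ^ (N - 1) * y ^ N ≤ 4 ^ N * y ^ N := by gcongr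
    _ = (4 * y) ^ N := (mul_pow _ _ _).symm
    _ ≤ ((N : ℝ) + 1) * (4 * y) ^ N :=
        le_mul_of_one_le_left (by positivity) (le_add_of_nonneg_left N.cast_nonneg)

/-- **Lemma.** If `|C(n,k,i)| ≤ C·n^{i+1}` for `1 ≤ i ≤ N`, then
`|∑_{m=0}^{N} (1/m!) ∑_{i₁+⋯+iₘ=N} C(n,k,i₁)⋯C(n,k,iₘ)| ≤ (N+1)·(4Cn²)^N`. -/
theorem stmt6 (n k N : ℕ) (hn : 3 ≤ n) (C : ℝ) (hC : 1 ≤ C)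
    (hbound : ∀ i : ℕ, 1 ≤ i → i ≤ N → |Cnki n k i| ≤ C * (n : ℝ) ^ (i + 1)) :
    |∑ m ∈ Finset.range (N + 1),
        (1 / (Nat.factorial m : ℝ)) * ∑ f ∈ posTuples m N, ∏ j, Cnki n k (f j)| ≤
      ((N : ℝ) + 1) * (4 * C * (n : ℝ) ^ 2) ^ N := by
  have hCn : 1 ≤ C * n := one_le_mul_of_one_le_of_one_le hC (mod_cast show 1 ≤ n by omega)
  simpa only [mul_assoc, Real.norm_eq_abs] using (stmt6_general n.cast_nonneg hCn hbound
    fun m _ => norm_one_div_factorial_le_one m).trans (two_pow_pred_mul_pow_le (by positivity) N)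
end

section
/- For all integers n ≥ 3 and all integers k, l with 0 ≤ k ≤ l − 1, one has ((k+1)^{k+n−1}/(k+1)!)·((l+1)!/(l+1)^{l+n−1}) ≤ ((k+1)/(l+1))^{n−5/2}·e^{l−k}, where the exponent n − 5/2 is a real exponent of the positive real number (k+1)/(l+1). -/
open Real

/-!
Write `s m = m! / (√(2m) (m/e)^m)` for the Stirling sequence and put `a = k + 1`, `b = l + 1`.
Replacing the two factorials by `m! = s m · √(2m) (m/e)^m` turns the left-hand side into exactly
`(a/b)^(n - 5/2) · e^(a - b) · (s b / s a)`. Since `s` is decreasing, `s b / s a ≤ 1`, so the bound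
holds even with `e^(k - l)` in place of `e^(l - k)`, and monotonicity of `s` takes the place of the
two-sided Robbins bounds.
-/

lemma pow_add_sub_one_eq_rpow (x : ℝ) (m n : ℕ) (h : 1 ≤ m + n) :
    x ^ (m + n - 1) = x ^ ((m : ℝ) + n - 1) := by
  rw [← rpow_natCast, Nat.cast_sub h, Nat.cast_add, Nat.cast_one]

section

open Stirling
open scoped Nat

lemma factorial_eq_stirlingSeq_mul {m : ℕ} (hm : m ≠ 0) :
    (m ! : ℝ) = stirlingSeq m * (√(2 * m) * (m / exp 1) ^ m) := by
  rw [stirlingSeq, div_mul_cancel₀]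
  positivity

lemma rpow_add_div_factorial {m : ℕ} (hm : m ≠ 0) (x : ℝ) :
    (m : ℝ) ^ (m + x) / m ! = (m : ℝ) ^ (x - 1 / 2) * exp m / (√2 * stirlingSeq m) := by
  have hm₀ : (0 : ℝ) < m := by positivity
  have hpow : (m : ℝ) ^ (m + x) = m ^ m * (m ^ (x - 1 / 2) * √m) := by
    rw [sqrt_eq_rpow, ← rpow_add hm₀, sub_add_cancel, rpow_add hm₀, rpow_natCast]
  rw [factorial_eq_stirlingSeq_mul hm, hpow, sqrt_mul zero_le_two, div_pow, ← exp_nat_mul, mul_one]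
  field_simp

lemma rpow_div_factorial_mul_factorial_div_rpow {a b : ℕ} (ha : a ≠ 0) (hb : b ≠ 0) (x : ℝ) :
    ((a : ℝ) ^ (a + x) / a !) * (b ! / (b : ℝ) ^ (b + x)) =
      ((a : ℝ) / b) ^ (x - 1 / 2) * exp (a - b) * (stirlingSeq b / stirlingSeq a) := by
  rw [← inv_div _ (b ! : ℝ), rpow_add_div_factorial ha, rpow_add_div_factorial hb,
    div_rpow a.cast_nonneg b.cast_nonneg, exp_sub]
  field_simp

theorem stmt7_general (n : ℝ) {k l : ℕ} (hkl : k ≤ l) :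
    ((k + 1 : ℝ) ^ (k + n - 1) / (k + 1)!) * ((l + 1)! / (l + 1 : ℝ) ^ (l + n - 1)) ≤
      ((k + 1 : ℝ) / (l + 1)) ^ (n - 5 / 2) * exp (k - l) := by
  have hratio : stirlingSeq (l + 1) / stirlingSeq (k + 1) ≤ 1 :=
    div_le_one_of_le₀ (stirlingSeq'_antitone hkl) (stirlingSeq'_pos k).le
  have hpow (m : ℕ) : (m + n - 1 : ℝ) = (m + 1 : ℕ) + (n - 2) := by push_cast; ring
  calc
    _ = ((k + 1 : ℝ) / (l + 1)) ^ (n - 5 / 2) * exp (k - l) *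
          (stirlingSeq (l + 1) / stirlingSeq (k + 1)) := by
      have h := rpow_div_factorial_mul_factorial_div_rpow k.succ_ne_zero l.succ_ne_zero (n - 2)
      rw [hpow, hpow, show n - 5 / 2 = n - 2 - 1 / 2 by ring,
        ← add_sub_add_right_eq_sub (k : ℝ) l 1]
      exact_mod_cast h
    _ ≤ _ := mul_le_of_le_one_right (by positivity) hratio

end

/-- **Lemma (Stirling-type comparison).** For integers `n ≥ 3` and `0 ≤ k ≤ l − 1`,
`((k+1)^{k+n−1}/(k+1)!) · ((l+1)!/(l+1)^{l+n−1}) ≤ ((k+1)/(l+1))^{n−5/2} · e^{l−k}`,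
where `n − 5/2` is a real exponent. -/
theorem stmt7 (n k l : ℕ) (hn : 3 ≤ n) (hkl : k + 1 ≤ l) :
    ((k + 1 : ℝ) ^ (k + n - 1) / (Nat.factorial (k + 1) : ℝ)) *
        ((Nat.factorial (l + 1) : ℝ) / (l + 1 : ℝ) ^ (l + n - 1)) ≤
      ((k + 1 : ℝ) / (l + 1 : ℝ)) ^ ((n : ℝ) - 5 / 2) *
        Real.exp ((l : ℝ) - k) := by
  rw [pow_add_sub_one_eq_rpow _ k n (by lia), pow_add_sub_one_eq_rpow _ l n (by lia)]
  exact (stmt7_general n (by lia)).trans (by gcongr <;> lia)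
end

section
/- For every real constant C ≥ 1 there exists N > 0 such that for all integers n > N, all integers l with 1 ≤ l ≤ n/(10·log n), and all integers k with 0 ≤ k ≤ l − 1, one has ((k+1)/(l+1))^n·(4eCn²)^{l−k} ≤ exp(−n/(l+1) + log(4eCn²)); that is, the maximum over k of the left-hand side is attained at k = l − 1. -/
/-!
Write `A = 4eCn²` and `j = l - k`. Since `(k+1)/(l+1) = 1 - j/(l+1) ≤ exp (-j/(l+1))`, the left-hand
side is at most `exp (j (log A - n/(l+1)))`. If the bracket is nonpositive, then this bound is
largest at `j = 1`. Now `log A ∼ 2 log n`, while `l ≤ n / (10 log n)` makes `n/(l+1)` at least about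
`10 log n`; only `2 < 10` matters, so any exponent `d` in `A = B n ^ d` and any constant `c > d` in
the bound on `l` will do.
-/

open Real

open Filter

theorem pow_mul_pow_le_exp {t A : ℝ} (ht : 0 ≤ t) (hA : 0 < A) (n j : ℕ) :
    t ^ n * A ^ j ≤ exp (n * (t - 1) + j * log A) := by
  have ht_exp : t ≤ exp (t - 1) := by simpa using add_one_le_exp (t - 1)
  calc t ^ n * A ^ j ≤ exp (t - 1) ^ n * exp (log A) ^ j := by
        rw [exp_log hA]
        gcongr
    _ = exp (n * (t - 1) + j * log A) := by rw [← exp_nat_mul, ← exp_nat_mul, ← exp_add]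

theorem one_sub_mul_pow_mul_pow_le_exp {s A : ℝ} {n j : ℕ} (hj : 1 ≤ j) (hjs : j * s ≤ 1)
    (hA : 0 < A) (hlogA : log A ≤ n * s) :
    (1 - j * s) ^ n * A ^ j ≤ exp (-(n * s) + log A) := by
  refine (pow_mul_pow_le_exp (sub_nonneg.2 hjs) hA n j).trans (exp_le_exp.2 ?_)
  have hj' : (1 : ℝ) ≤ j := by exact_mod_cast hj
  calc n * (1 - j * s - 1) + j * log A = j * (log A - n * s) := by ring
    _ ≤ log A - n * s := mul_le_of_one_le_left (sub_nonpos.2 hlogA) hj'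
    _ = -(n * s) + log A := by ring

theorem succ_div_succ_pow_mul_pow_le_exp {A : ℝ} {n l k : ℕ} (hkl : k < l) (hA : 0 < A)
    (hlogA : log A ≤ n / (l + 1)) :
    ((k + 1 : ℝ) / (l + 1)) ^ n * A ^ (l - k) ≤ exp (-(n : ℝ) / (l + 1) + log A) := by
  have hbase : (k + 1 : ℝ) / (l + 1) = 1 - (l - k : ℕ) * (l + 1 : ℝ)⁻¹ := by
    rw [Nat.cast_sub hkl.le]
    field_simp
    ring
  have hjs : (l - k : ℕ) * (l + 1 : ℝ)⁻¹ ≤ 1 := sub_nonneg.1 (hbase ▸ by positivity)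
  rw [div_eq_mul_inv] at hlogA
  rw [hbase, neg_div, div_eq_mul_inv]
  exact one_sub_mul_pow_mul_pow_le_exp (Nat.sub_pos_of_lt hkl) hjs hA hlogA

theorem eventually_log_const_mul_pow_le {B r : ℝ} {d : ℕ} (hB : 0 < B) (hdr : d < r) :
    ∀ᶠ x : ℝ in atTop, log (B * x ^ d) ≤ r * log x := by
  have hlim : Tendsto (fun x ↦ (r - d) * log x) atTop atTop :=
    tendsto_log_atTop.const_mul_atTop (sub_pos.2 hdr)
  filter_upwards [hlim.eventually_ge_atTop (log B), eventually_gt_atTop 0] with x hx hx0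
  rw [log_mul hB.ne' (pow_pos hx0 d).ne', log_pow]
  linarith

theorem eventually_mul_log_le_div_add_one {r c : ℝ} (hr : 0 < r) (hrc : r < c) :
    ∀ᶠ x : ℝ in atTop, ∀ y, 0 ≤ y → y ≤ x / (c * log x) → r * log x ≤ x / (y + 1) := by
  have hc : 0 < c := hr.trans hrc
  have hlog_small : ∀ᶠ x : ℝ in atTop, log x ≤ (1 / r - 1 / c) * x := by
    have hε : 0 < 1 / r - 1 / c := sub_pos.2 (one_div_lt_one_div_of_lt hr hrc)
    filter_upwards [isLittleO_log_id_atTop.bound hε, eventually_ge_atTop 0] with x hx hx0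
    simpa only [id, norm_of_nonneg hx0] using (le_norm_self _).trans hx
  filter_upwards [hlog_small, eventually_gt_atTop 1] with x hx hx1 y hy0 hy
  have hlog : 0 < log x := log_pos hx1
  rw [le_div_iff₀ (by positivity)]
  calc r * log x * (y + 1) ≤ r * log x * (x / (c * log x) + 1) := by gcongr
    _ = r * (x / c + log x) := by field_simp
    _ ≤ r * (x / c + (1 / r - 1 / c) * x) := by gcongr
    _ = x := by
        field_simp
        ring

theorem stmt8_general {B c : ℝ} {d : ℕ} (hB : 0 < B) (hdc : d < c) :
    ∀ᶠ n : ℕ in atTop, ∀ l k : ℕ, (l : ℝ) ≤ n / (c * log n) → k < l →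
      ((k + 1 : ℝ) / (l + 1)) ^ n * (B * (n : ℝ) ^ d) ^ (l - k) ≤
        exp (-(n : ℝ) / (l + 1) + log (B * (n : ℝ) ^ d)) := by
  obtain ⟨r, hdr, hrc⟩ := exists_between hdc
  have hr : 0 < r := d.cast_nonneg.trans_lt hdr
  have hcast := tendsto_natCast_atTop_atTop (R := ℝ)
  filter_upwards [hcast.eventually (eventually_log_const_mul_pow_le hB hdr),
    hcast.eventually (eventually_mul_log_le_div_add_one hr hrc),
    eventually_gt_atTop 0] with n hlogA hdiv hn l k hl hkl
  exact succ_div_succ_pow_mul_pow_le_exp hkl (by positivity)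
    (hlogA.trans (hdiv l l.cast_nonneg hl))

/-- **Lemma.** For every real `C ≥ 1` there is `N > 0` such that for all integers
`n > N`, `1 ≤ l ≤ n/(10 log n)` and `0 ≤ k ≤ l − 1`,
`((k+1)/(l+1))^n · (4eCn²)^{l−k} ≤ exp(−n/(l+1) + log(4eCn²))`;
i.e. the maximum over `k` of the left-hand side is attained at `k = l − 1`. -/
theorem stmt8 (C : ℝ) (hC : 1 ≤ C) :
    ∃ N : ℕ, 0 < N ∧ ∀ n l k : ℕ, N < n → 1 ≤ l →
      (l : ℝ) ≤ (n : ℝ) / (10 * Real.log n) → k + 1 ≤ l →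
      ((k + 1 : ℝ) / (l + 1 : ℝ)) ^ n *
          (4 * Real.exp 1 * C * (n : ℝ) ^ 2) ^ (l - k) ≤
        Real.exp (-(n : ℝ) / (l + 1) + Real.log (4 * Real.exp 1 * C * (n : ℝ) ^ 2)) := by
  obtain ⟨N, hN⟩ := eventually_atTop.1
    (stmt8_general (B := 4 * exp 1 * C) (c := 10) (d := 2) (by positivity) (by norm_num))
  exact ⟨N + 1, N.succ_pos, fun n l k hn _ hl hkl ↦ hN n (by omega) l k hl hkl⟩
end

section
/- For all integers l ≥ 2 and n ≥ 2, one has ((l−1)/l)·(l²/(l²−1))^{l+n−2} ≥ exp(n/l² − (3l−2)/(l²(l−1))). -/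
open Real

/-!
The inequality `1 - u⁻¹ ≤ log u`, taken at `u = a / (a - 1)`, reads `exp a⁻¹ ≤ a / (a - 1)`.
Both factors have this shape: `a = x ^ 2` bounds the base of the power below by `exp (1 / x ^ 2)`,
and `a = 1 - x` bounds `(x - 1) / x` below by `exp (-1 / (x - 1))`. The resulting exponents add up
exactly to the required one.
-/

theorem exp_one_sub_inv_le {u : ℝ} (hu : 0 < u) : exp (1 - u⁻¹) ≤ u :=
  (le_log_iff_exp_le hu).1 (one_sub_inv_le_log_of_pos hu)

theorem exp_inv_le_div_sub_one {a : ℝ} (ha : a < 0 ∨ 1 < a) : exp a⁻¹ ≤ a / (a - 1) := by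
  have hpos : 0 < a / (a - 1) := by
    rcases ha with ha | ha
    · exact div_pos_of_neg_of_neg ha (by linarith)
    · exact div_pos (by linarith) (by linarith)
  have ha₀ : a ≠ 0 := (div_ne_zero_iff.1 hpos.ne').1
  have hexponent : 1 - (a / (a - 1))⁻¹ = a⁻¹ := by
    rw [inv_div]
    field_simp
    ring
  simpa only [hexponent] using exp_one_sub_inv_le hpos

theorem exp_div_le_div_sub_one_rpow {a s : ℝ} (ha : a < 0 ∨ 1 < a) (hs : 0 ≤ s) :
    exp (s / a) ≤ (a / (a - 1)) ^ s :=
  calc exp (s / a) = exp a⁻¹ ^ s := by rw [← exp_mul, div_eq_inv_mul]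
    _ ≤ (a / (a - 1)) ^ s := by gcongr; exact exp_inv_le_div_sub_one ha

theorem exp_inv_one_sub_le {x : ℝ} (hx : x < 0 ∨ 1 < x) : exp (1 - x)⁻¹ ≤ (x - 1) / x := by
  have h : 1 - x < 0 ∨ 1 < 1 - x := by
    rcases hx with hx | hx
    · exact .inr (by linarith)
    · exact .inl (by linarith)
  calc exp (1 - x)⁻¹ ≤ (1 - x) / (1 - x - 1) := exp_inv_le_div_sub_one h
    _ = (x - 1) / x := by rw [← neg_div_neg_eq]; ring_nf

theorem stmt11_general {x y : ℝ} (hx : 1 < |x|) (hxy : 2 ≤ x + y) :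
    exp (y / x ^ 2 - (3 * x - 2) / (x ^ 2 * (x - 1))) ≤
      (x - 1) / x * (x ^ 2 / (x ^ 2 - 1)) ^ (x + y - 2) := by
  have hx' : x < 0 ∨ 1 < x := (lt_abs.1 hx).symm.imp_left fun h ↦ by linarith
  have hsq : 1 < x ^ 2 := (one_lt_sq_iff_one_lt_abs x).2 hx
  have hexponent : y / x ^ 2 - (3 * x - 2) / (x ^ 2 * (x - 1)) =
      (1 - x)⁻¹ + (x + y - 2) / x ^ 2 := by
    have hx₀ : x ≠ 0 := by rcases hx' with h | h <;> linarith
    have hx₁ : x - 1 ≠ 0 := by rcases hx' with h | h <;> linarith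
    rw [← neg_sub x 1, inv_neg]
    field_simp
    ring
  rw [hexponent, exp_add]
  have hfactor : exp (1 - x)⁻¹ ≤ (x - 1) / x := exp_inv_one_sub_le hx'
  have hpower : exp ((x + y - 2) / x ^ 2) ≤ (x ^ 2 / (x ^ 2 - 1)) ^ (x + y - 2) :=
    exp_div_le_div_sub_one_rpow (.inr hsq) (by linarith)
  exact mul_le_mul hfactor hpower (exp_nonneg _) ((exp_nonneg _).trans hfactor)

/-- **Lemma.** For all integers `l ≥ 2` and `n ≥ 2`,
`((l−1)/l) · (l²/(l²−1))^{l+n−2} ≥ exp(n/l² − (3l−2)/(l²(l−1)))`. -/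
theorem stmt11 (l n : ℕ) (hl : 2 ≤ l) (hn : 2 ≤ n) :
    ((l : ℝ) - 1) / (l : ℝ) * ((l : ℝ) ^ 2 / ((l : ℝ) ^ 2 - 1)) ^ (l + n - 2) ≥
      Real.exp ((n : ℝ) / (l : ℝ) ^ 2 -
        (3 * (l : ℝ) - 2) / ((l : ℝ) ^ 2 * ((l : ℝ) - 1))) := by
  have hcast : ((l + n - 2 : ℕ) : ℝ) = (l : ℝ) + n - 2 := by
    push_cast [Nat.le_add_right_of_le hl]
    rfl
  rw [← rpow_natCast, hcast]
  exact stmt11_general (by rw [Nat.abs_cast]; exact_mod_cast hl) (by exact_mod_cast (by omega))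
end
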